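/- arXiv:2504.05091 — 2 statements merged into one kernel-verified Lean document; each statement's English description precedes it below -/
import Mathlib

section
/- Let n ≥ 1, let C₁, C₂, C₃ > 0, and let ξ ≥ 8C₂²/C₁ + C₃. Let P : ℝ → Mat(n×n, ℝ) be continuously differentiable and Q : ℝ → Mat(n×n, ℝ) continuously differentiable, R : ℝ → Mat(n×n, ℝ) continuous, with ⟨P(t)v, v⟩ ≥ C₁‖v‖² for all t, v, ‖Q(t)‖ ≤ C₂ and ‖R(t)‖ ≤ C₃ for all t. Suppose w : ℝ → ℝⁿ is twice differentiable, w and w' are square-integrable on ℝ, w(t) → 0 and w'(t) → 0 as t → ±∞, and w satisfies the equation −d/dt(P(t)w'(t) + Q(t)w(t)) + Q(t)ᵀw'(t) + R(t)w(t) + ξ·w(t) = 0 for every t ∈ ℝ. Then w is identically zero. -/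
open MeasureTheory Matrix Filter
open scoped RealInnerProductSpace

attribute [local instance] Matrix.normedAddCommGroup Matrix.normedSpace

/-- The action of a real `n × n` matrix on `EuclideanSpace ℝ (Fin n)`. -/
noncomputable def mvE {n : ℕ} (A : Matrix (Fin n) (Fin n) ℝ)
    (v : EuclideanSpace ℝ (Fin n)) : EuclideanSpace ℝ (Fin n) :=
  Matrix.toEuclideanLin A v

/-- The (ℓ²-)operator norm of a real `n × n` matrix. -/
noncomputable def matOpNorm {n : ℕ} (A : Matrix (Fin n) (Fin n) ℝ) : ℝ :=
  ‖LinearMap.toContinuousLinearMap (Matrix.toEuclideanLin A)‖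

/-!
Pairing the equation with `w` shows that `f = ⟪P w' + Q w, w⟫` satisfies
`f' ≥ c (‖w‖² + ‖w'‖²)` with `c > 0`, so `f` is monotone, and the flux `u = P w' + Q w` satisfies
`‖u'‖² ≤ K f'`. As `P` may be unbounded, `u` need not tend to zero, nor is it clear that `f` does.
Instead, Cauchy–Schwarz gives `‖u t - u T‖² ≤ K (t - T) (f t - f T)`, so if `f T > 0` then
`‖u t‖² = O(t f t)`; together with `f² ≤ ‖u‖² ‖w‖²` this forces `f t = O(t ‖w t‖²)`, so that `‖w‖²`
dominates a multiple of `1 / t` and is not integrable. Hence `f ≤ 0`, by reflection `f ≥ 0`, and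
`f' = 0` gives `w = 0`.
-/

section DerivativeBounds

variable {E : Type*} [NormedAddCommGroup E] [NormedSpace ℝ E]
  {u u' : ℝ → E} {f f' g : ℝ → ℝ} {K : ℝ}

theorem hasDerivAt_of_neg_deriv_add_eq_zero {t : ℝ} {v : E} (hu : DifferentiableAt ℝ u t)
    (h : -deriv u t + v = 0) : HasDerivAt u v t :=
  neg_add_eq_zero.1 h ▸ hu.hasDerivAt

theorem norm_sub_sq_le_mul_sub_of_norm_deriv_sq_le {a b : ℝ} (hab : a ≤ b)
    (hu : ∀ t ∈ Set.Icc a b, HasDerivAt u (u' t) t)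
    (hf : ∀ t ∈ Set.Icc a b, HasDerivAt f (f' t) t)
    (hu' : ∀ t ∈ Set.Icc a b, ‖u' t‖ ^ 2 ≤ f' t) :
    ‖u b - u a‖ ^ 2 ≤ (b - a) * (f b - f a) := by
  rcases hab.eq_or_lt with rfl | hlt
  · simp
  -- Integrating `2 m ‖u'‖ ≤ ‖u'‖² + m²` gives the sharpest bound when `m` is the mean slope.
  set m := ‖u b - u a‖ / (b - a) with hm
  have hm0 : 0 ≤ m := div_nonneg (norm_nonneg _) (sub_nonneg.2 hab)
  have hv (t : ℝ) (ht : t ∈ Set.Icc a b) :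
      HasDerivAt (fun s => (2 * m) • (u s - u a)) ((2 * m) • u' t) t :=
    ((hu t ht).sub_const _).const_smul _
  have hB (t : ℝ) (ht : t ∈ Set.Icc a b) :
      HasDerivAt (fun s => f s - f a + m ^ 2 * (s - a)) (f' t + m ^ 2) t := by
    simpa using ((hf t ht).sub_const (f a)).fun_add
      (((hasDerivAt_id t).sub_const a).const_mul (m ^ 2))
  have hbound (t : ℝ) (ht : t ∈ Set.Ico a b) : ‖(2 * m) • u' t‖ ≤ f' t + m ^ 2 := by
    rw [norm_smul, Real.norm_of_nonneg (mul_nonneg zero_le_two hm0)]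
    linarith [two_mul_le_add_sq m ‖u' t‖, hu' t (Set.Ico_subset_Icc_self ht)]
  have key : ‖(2 * m) • (u b - u a)‖ ≤ f b - f a + m ^ 2 * (b - a) :=
    image_norm_le_of_norm_deriv_right_le_deriv_boundary'
      (fun t ht => (hv t ht).continuousAt.continuousWithinAt)
      (fun t ht => (hv t (Set.Ico_subset_Icc_self ht)).hasDerivWithinAt) (by simp)
      (fun t ht => (hB t ht).continuousAt.continuousWithinAt)
      (fun t ht => (hB t (Set.Ico_subset_Icc_self ht)).hasDerivWithinAt)
      hbound (Set.right_mem_Icc.2 hab)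
  have hba : 0 < b - a := sub_pos.2 hlt
  have hnorm : ‖u b - u a‖ = m * (b - a) := by rw [hm, div_mul_cancel₀ _ hba.ne']
  rw [norm_smul, Real.norm_of_nonneg (mul_nonneg zero_le_two hm0), hnorm] at key
  calc ‖u b - u a‖ ^ 2 = (b - a) * (m ^ 2 * (b - a)) := by rw [hnorm]; ring
    _ ≤ (b - a) * (f b - f a) := by gcongr; linarith

theorem not_integrableAtFilter_atTop_of_inv_isBigO {F : Type*} [NormedAddCommGroup F] {g : ℝ → F}
    (hg : (fun t : ℝ => t⁻¹) =O[atTop] g) : ¬IntegrableAtFilter g atTop := by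
  intro hint
  have hinv : IntegrableAtFilter (fun t : ℝ => t⁻¹) atTop :=
    hg.integrableAtFilter measurable_inv.stronglyMeasurable.stronglyMeasurableAtFilter hint
  obtain ⟨a, ha⟩ := integrableAtFilter_atTop_iff.1 hinv
  exact not_integrableOn_Ioi_inv (ha.mono_set Set.Ioi_subset_Ici_self)

theorem norm_sq_le_mul_of_norm_deriv_sq_le {T t : ℝ} (hT : 1 ≤ T) (hTt : T ≤ t) (hK : 0 ≤ K)
    (hu : ∀ s ∈ Set.Icc T t, HasDerivAt u (u' s) s)
    (hf : ∀ s ∈ Set.Icc T t, HasDerivAt f (f' s) s)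
    (hu' : ∀ s ∈ Set.Icc T t, ‖u' s‖ ^ 2 ≤ K * f' s) (hfT : 0 < f T) (hle : f T ≤ f t) :
    ‖u t‖ ^ 2 ≤ 2 * (‖u T‖ ^ 2 / f T + K) * t * f t := by
  have ht : 1 ≤ t := hT.trans hTt
  have hdiff : ‖u t - u T‖ ^ 2 ≤ K * (t * f t) :=
    calc ‖u t - u T‖ ^ 2 ≤ (t - T) * (K * f t - K * f T) :=
          norm_sub_sq_le_mul_sub_of_norm_deriv_sq_le hTt hu (fun s hs => (hf s hs).const_mul K) hu'
      _ = K * ((t - T) * (f t - f T)) := by ring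
      _ ≤ K * (t * f t) := by gcongr <;> linarith
  have hstart : ‖u T‖ ^ 2 ≤ ‖u T‖ ^ 2 / f T * (t * f t) :=
    calc ‖u T‖ ^ 2 = ‖u T‖ ^ 2 / f T * (1 * f T) := by field_simp
      _ ≤ ‖u T‖ ^ 2 / f T * (t * f t) := by gcongr
  have htri : ‖u t‖ ≤ ‖u T‖ + ‖u t - u T‖ := norm_le_insert' _ _
  calc ‖u t‖ ^ 2 ≤ (‖u T‖ + ‖u t - u T‖) ^ 2 := by gcongr
    _ ≤ 2 * (‖u T‖ ^ 2 + ‖u t - u T‖ ^ 2) := add_sq_le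
    _ ≤ 2 * (‖u T‖ ^ 2 / f T + K) * t * f t := by linarith

theorem nonpos_of_norm_deriv_sq_le (hK : 0 < K) (hu : ∀ t, HasDerivAt u (u' t) t)
    (hf : ∀ t, HasDerivAt f (f' t) t) (hu' : ∀ t, ‖u' t‖ ^ 2 ≤ K * f' t)
    (hfg : ∀ t, f t ^ 2 ≤ ‖u t‖ ^ 2 * g t) (hg : IntegrableAtFilter g atTop) (t : ℝ) :
    f t ≤ 0 := by
  by_contra! hft
  have hmono : Monotone f := monotone_of_hasDerivAt_nonneg hf fun s =>
    nonneg_of_mul_nonneg_right ((sq_nonneg _).trans (hu' s)) hK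
  obtain ⟨T, hT, hfT⟩ : ∃ T, 1 ≤ T ∧ 0 < f T :=
    ⟨max 1 t, le_max_left _ _, hft.trans_le (hmono (le_max_right _ _))⟩
  set A := 2 * (‖u T‖ ^ 2 / f T + K)
  refine not_integrableAtFilter_atTop_of_inv_isBigO (.of_bound (A / f T) ?_) hg
  filter_upwards [eventually_ge_atTop T] with s hs
  have hs0 : 0 < s := by linarith
  have hfs : 0 < f s := hfT.trans_le (hmono hs)
  have hgs : 0 ≤ g s :=
    (pos_of_mul_pos_right ((pow_pos hfs 2).trans_le (hfg s)) (sq_nonneg _)).le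
  have hlower : f s ≤ A * s * g s := by
    refine le_of_mul_le_mul_left ?_ hfs
    calc f s * f s = f s ^ 2 := (sq _).symm
      _ ≤ ‖u s‖ ^ 2 * g s := hfg s
      _ ≤ A * s * f s * g s := by
        gcongr
        exact norm_sq_le_mul_of_norm_deriv_sq_le hT hs hK.le (fun r _ => hu r) (fun r _ => hf r)
          (fun r _ => hu' r) hfT (hmono hs)
      _ = f s * (A * s * g s) := by ring
  rw [Real.norm_of_nonneg (inv_nonneg.2 hs0.le), Real.norm_of_nonneg hgs, div_mul_eq_mul_div,
    inv_eq_one_div, div_le_div_iff₀ hs0 hfT]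
  linarith [hmono hs]

theorem eq_zero_of_norm_deriv_sq_le (hK : 0 < K) (hu : ∀ t, HasDerivAt u (u' t) t)
    (hf : ∀ t, HasDerivAt f (f' t) t) (hu' : ∀ t, ‖u' t‖ ^ 2 ≤ K * f' t)
    (hfg : ∀ t, f t ^ 2 ≤ ‖u t‖ ^ 2 * g t) (hg : Integrable g) (t : ℝ) : f t = 0 := by
  refine le_antisymm
    (nonpos_of_norm_deriv_sq_le hK hu hf hu' hfg (hg.integrableAtFilter _) t) ?_
  have hu_neg (s : ℝ) : HasDerivAt (fun s => u (-s)) (-u' (-s)) s := by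
    simpa [Function.comp_def] using (hu (-s)).scomp s (hasDerivAt_neg s)
  have hf_neg (s : ℝ) : HasDerivAt (fun s => -f (-s)) (f' (-s)) s := by
    simpa [Function.comp_def] using ((hf (-s)).scomp s (hasDerivAt_neg s)).fun_neg
  simpa using nonpos_of_norm_deriv_sq_le hK hu_neg hf_neg (fun s => by simpa using hu' (-s))
    (fun s => by simpa using hfg (-s)) (hg.comp_neg.integrableAtFilter _) (-t)

end DerivativeBounds

-- The smallest eigenvalue of `!![a, -b; -b, d]` is at least its determinant over its trace.
theorem det_div_trace_mul_le {a b d : ℝ} (had : 0 < a + d) (x y : ℝ) :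
    (a * d - b ^ 2) / (a + d) * (x ^ 2 + y ^ 2) ≤ a * x ^ 2 - 2 * b * (x * y) + d * y ^ 2 := by
  rw [div_mul_eq_mul_div, div_le_iff₀ had]
  linarith [sq_nonneg (a * x - b * y), sq_nonneg (b * x - d * y)]

section SturmLiouville

open scoped InnerProduct

variable {E : Type*} [NormedAddCommGroup E] [InnerProductSpace ℝ E] [CompleteSpace E]
  {C₁ C₂ C₃ ξ : ℝ}

theorem le_inner_add_inner_adjoint {A B C : E →L[ℝ] E} (hA : ∀ v, C₁ * ‖v‖ ^ 2 ≤ ⟪A v, v⟫)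
    (hB : ‖B‖ ≤ C₂) (hC : ‖C‖ ≤ C₃) (x y : E) :
    C₁ * ‖y‖ ^ 2 - 2 * C₂ * (‖y‖ * ‖x‖) + (ξ - C₃) * ‖x‖ ^ 2 ≤
      ⟪A y + B x, y⟫ + ⟪(B†) y + C x + ξ • x, x⟫ := by
  have hBxy : -(C₂ * ‖x‖ * ‖y‖) ≤ ⟪B x, y⟫ :=
    (abs_le.1 ((abs_real_inner_le_norm _ _).trans (by gcongr; exact B.le_of_opNorm_le hB x))).1
  have hCxx : -(C₃ * ‖x‖ * ‖x‖) ≤ ⟪C x, x⟫ :=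
    (abs_le.1 ((abs_real_inner_le_norm _ _).trans (by gcongr; exact C.le_of_opNorm_le hC x))).1
  simp only [inner_add_left, ContinuousLinearMap.adjoint_inner_left, real_inner_smul_left,
    real_inner_self_eq_norm_sq, real_inner_comm (B x) y]
  linarith [hA y]

theorem norm_adjoint_add_add_smul_sq_le {B C : E →L[ℝ] E} (hB : ‖B‖ ≤ C₂) (hC : ‖C‖ ≤ C₃)
    (x y : E) :
    ‖(B†) y + C x + ξ • x‖ ^ 2 ≤ (C₂ ^ 2 + (C₃ + |ξ|) ^ 2) * (‖y‖ ^ 2 + ‖x‖ ^ 2) := by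
  have hBy : ‖(B†) y‖ ≤ C₂ * ‖y‖ :=
    (B†).le_of_opNorm_le (by rwa [LinearIsometryEquiv.norm_map]) y
  have hnorm : ‖(B†) y + C x + ξ • x‖ ≤ C₂ * ‖y‖ + (C₃ + |ξ|) * ‖x‖ :=
    calc ‖(B†) y + C x + ξ • x‖ ≤ ‖(B†) y‖ + ‖C x‖ + ‖ξ • x‖ := norm_add₃_le
      _ ≤ C₂ * ‖y‖ + C₃ * ‖x‖ + |ξ| * ‖x‖ := by
        rw [norm_smul, Real.norm_eq_abs]
        gcongr
        exact C.le_of_opNorm_le hC x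
      _ = C₂ * ‖y‖ + (C₃ + |ξ|) * ‖x‖ := by ring
  calc ‖(B†) y + C x + ξ • x‖ ^ 2 ≤ (C₂ * ‖y‖ + (C₃ + |ξ|) * ‖x‖) ^ 2 := by gcongr
    _ ≤ (C₂ ^ 2 + (C₃ + |ξ|) ^ 2) * (‖y‖ ^ 2 + ‖x‖ ^ 2) := by
      linarith [sq_nonneg (C₂ * ‖x‖ - (C₃ + |ξ|) * ‖y‖)]

theorem stmt1_general (hC₁ : 0 < C₁) (hξ : C₂ ^ 2 / C₁ + C₃ < ξ) {P Q R : ℝ → E →L[ℝ] E}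
    (hP : ∀ t v, C₁ * ‖v‖ ^ 2 ≤ ⟪P t v, v⟫) (hQ : ∀ t, ‖Q t‖ ≤ C₂) (hR : ∀ t, ‖R t‖ ≤ C₃)
    {w w' : ℝ → E} (hw : ∀ t, HasDerivAt w (w' t) t) (hw2 : Integrable fun t => ‖w t‖ ^ 2)
    (heq : ∀ t, HasDerivAt (fun s => P s (w' s) + Q s (w s))
      (((Q t)†) (w' t) + R t (w t) + ξ • w t) t) (t : ℝ) :
    w t = 0 := by
  have hC₃ : 0 ≤ C₃ := (norm_nonneg _).trans (hR 0)
  have hdet : C₂ ^ 2 < C₁ * (ξ - C₃) := by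
    rw [mul_comm, ← div_lt_iff₀ hC₁]
    linarith
  have hξC₃ : 0 < ξ - C₃ := pos_of_mul_pos_right ((sq_nonneg C₂).trans_lt hdet) hC₁.le
  have hξ0 : 0 < ξ := by linarith
  set c := (C₁ * (ξ - C₃) - C₂ ^ 2) / (C₁ + (ξ - C₃))
  have hc : 0 < c := div_pos (sub_pos.2 hdet) (by positivity)
  set D := C₂ ^ 2 + (C₃ + |ξ|) ^ 2
  have hD : 0 < D := by positivity
  set u : ℝ → E := fun s => P s (w' s) + Q s (w s)
  set u' : ℝ → E := fun s => ((Q s)†) (w' s) + R s (w s) + ξ • w s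
  set f' : ℝ → ℝ := fun s => ⟪u s, w' s⟫ + ⟪u' s, w s⟫
  have hf (s : ℝ) : HasDerivAt (fun s => ⟪u s, w s⟫) (f' s) s := (heq s).inner ℝ (hw s)
  have hcoercive (s : ℝ) : c * (‖w' s‖ ^ 2 + ‖w s‖ ^ 2) ≤ f' s :=
    (det_div_trace_mul_le (by positivity) _ _).trans
      (le_inner_add_inner_adjoint (hP s) (hQ s) (hR s) _ _)
  have hu' (s : ℝ) : ‖u' s‖ ^ 2 ≤ D / c * f' s :=
    calc ‖u' s‖ ^ 2 ≤ D * (‖w' s‖ ^ 2 + ‖w s‖ ^ 2) :=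
          norm_adjoint_add_add_smul_sq_le (hQ s) (hR s) _ _
      _ = D / c * (c * (‖w' s‖ ^ 2 + ‖w s‖ ^ 2)) := by field_simp
      _ ≤ D / c * f' s := by gcongr; exact hcoercive s
  have hfw (s : ℝ) : ⟪u s, w s⟫ ^ 2 ≤ ‖u s‖ ^ 2 * ‖w s‖ ^ 2 := by
    rw [← mul_pow]
    exact sq_le_sq' (neg_le_of_abs_le (abs_real_inner_le_norm _ _)) (real_inner_le_norm _ _)
  have hzero : (fun s => ⟪u s, w s⟫) = fun _ => 0 :=
    funext (eq_zero_of_norm_deriv_sq_le (div_pos hD hc) heq hf hu' hfw hw2)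
  have hf't : f' t = 0 := (hf t).unique (hzero ▸ hasDerivAt_const t 0)
  have hsum : ‖w' t‖ ^ 2 + ‖w t‖ ^ 2 ≤ 0 :=
    nonpos_of_mul_nonpos_right ((hcoercive t).trans_eq hf't) hc
  have hwt : ‖w t‖ ^ 2 = 0 := le_antisymm (by linarith [sq_nonneg ‖w' t‖]) (sq_nonneg _)
  simpa using hwt

end SturmLiouville

section MatrixCoefficients

open scoped InnerProduct

variable {n : ℕ}

theorem toEuclideanCLM_apply_eq_mvE (A : Matrix (Fin n) (Fin n) ℝ)
    (v : EuclideanSpace ℝ (Fin n)) : toEuclideanCLM (𝕜 := ℝ) A v = mvE A v :=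
  rfl

theorem adjoint_toEuclideanCLM_apply (A : Matrix (Fin n) (Fin n) ℝ)
    (v : EuclideanSpace ℝ (Fin n)) : ((toEuclideanCLM (𝕜 := ℝ) A)†) v = mvE Aᵀ v := by
  rw [← ContinuousLinearMap.star_eq_adjoint, ← map_star, star_eq_conjTranspose,
    conjTranspose_eq_transpose_of_trivial, toEuclideanCLM_apply_eq_mvE]

theorem differentiable_mvE {A : ℝ → Matrix (Fin n) (Fin n) ℝ} (hA : Differentiable ℝ A)
    {v : ℝ → EuclideanSpace ℝ (Fin n)} (hv : Differentiable ℝ v) :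
    Differentiable ℝ fun t => mvE (A t) (v t) :=
  let L := (toEuclideanCLM (n := Fin n) (𝕜 := ℝ)).toAlgEquiv.toLinearMap.toContinuousLinearMap
  (L.differentiable.comp hA).clm_apply hv

theorem hasDerivAt_toEuclideanCLM_flux {P Q R : ℝ → Matrix (Fin n) (Fin n) ℝ} {ξ t : ℝ}
    {w w' : ℝ → EuclideanSpace ℝ (Fin n)} (hP : Differentiable ℝ P) (hQ : Differentiable ℝ Q)
    (hw : Differentiable ℝ w) (hw' : Differentiable ℝ w')
    (heq : -deriv (fun s => mvE (P s) (w' s) + mvE (Q s) (w s)) t +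
      mvE (Q t)ᵀ (w' t) + mvE (R t) (w t) + ξ • w t = 0) :
    HasDerivAt
      (fun s => toEuclideanCLM (𝕜 := ℝ) (P s) (w' s) + toEuclideanCLM (𝕜 := ℝ) (Q s) (w s))
      (((toEuclideanCLM (𝕜 := ℝ) (Q t))†) (w' t) + toEuclideanCLM (𝕜 := ℝ) (R t) (w t) +
        ξ • w t) t := by
  simp only [adjoint_toEuclideanCLM_apply, toEuclideanCLM_apply_eq_mvE]
  exact hasDerivAt_of_neg_deriv_add_eq_zero
    ((differentiable_mvE hP hw').add (differentiable_mvE hQ hw) t)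
    (by rwa [← add_assoc, ← add_assoc])

end MatrixCoefficients

theorem stmt1 {n : ℕ} (hn : 1 ≤ n) (C₁ C₂ C₃ : ℝ) (hC₁ : 0 < C₁) (hC₂ : 0 < C₂)
    (hC₃ : 0 < C₃) (ξ : ℝ) (hξ : 8 * C₂ ^ 2 / C₁ + C₃ ≤ ξ)
    (P Q R : ℝ → Matrix (Fin n) (Fin n) ℝ)
    (hPc : ContDiff ℝ 1 P) (hQc : ContDiff ℝ 1 Q) (hRc : Continuous R)
    (hP : ∀ t : ℝ, ∀ v : EuclideanSpace ℝ (Fin n), C₁ * ‖v‖ ^ 2 ≤ ⟪mvE (P t) v, v⟫)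
    (hQ : ∀ t : ℝ, matOpNorm (Q t) ≤ C₂) (hR : ∀ t : ℝ, matOpNorm (R t) ≤ C₃)
    (w : ℝ → EuclideanSpace ℝ (Fin n))
    (hw : Differentiable ℝ w) (hw' : Differentiable ℝ (deriv w))
    (hw2 : Integrable (fun t => ‖w t‖ ^ 2))
    (hw'2 : Integrable (fun t => ‖deriv w t‖ ^ 2))
    (hwtop : Tendsto w atTop (nhds 0)) (hwbot : Tendsto w atBot (nhds 0))
    (hw'top : Tendsto (deriv w) atTop (nhds 0)) (hw'bot : Tendsto (deriv w) atBot (nhds 0))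
    (heq : ∀ t : ℝ,
      -deriv (fun s => mvE (P s) (deriv w s) + mvE (Q s) (w s)) t +
        mvE (Q t)ᵀ (deriv w t) + mvE (R t) (w t) + ξ • w t = 0) :
    ∀ t : ℝ, w t = 0 := by
  exact stmt1_general hC₁ (hξ.trans_lt' (by gcongr; linarith [pow_pos hC₂ 2])) hP hQ hR
    (fun t => (hw t).hasDerivAt) hw2 fun t => hasDerivAt_toEuclideanCLM_flux
      (hPc.differentiable one_ne_zero) (hQc.differentiable one_ne_zero) hw hw' (heq t)
end

section
/- Let n ≥ 1 and let P, Q, R be n×n real matrices with P and R symmetric, such that the 2n×2n block matrix [[P, Q], [Qᵀ, R]] is positive definite. Then P is invertible, and, with B the Hamiltonian coefficient matrix built from P, Q, R, the matrix JB is hyperbolic: every eigenvalue μ ∈ ℂ of the complexification of JB satisfies Re μ ≠ 0. -/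
open Matrix

/-- The standard symplectic matrix `J = [[0, -I], [I, 0]]` on `ℝ^{2n}`. -/
def Jmat (n : ℕ) : Matrix (Fin n ⊕ Fin n) (Fin n ⊕ Fin n) ℝ :=
  Matrix.fromBlocks 0 (-1) 1 0

/-- The Hamiltonian coefficient matrix
`B = [[P⁻¹, -P⁻¹Q], [-QᵀP⁻¹, QᵀP⁻¹Q - R]]` built from `P, Q, R`. -/
noncomputable def hamB {n : ℕ} (P Q R : Matrix (Fin n) (Fin n) ℝ) :
    Matrix (Fin n ⊕ Fin n) (Fin n ⊕ Fin n) ℝ :=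
  Matrix.fromBlocks P⁻¹ (-(P⁻¹ * Q)) (-(Qᵀ * P⁻¹)) (Qᵀ * P⁻¹ * Q - R)

/-! Put `M = [[P, Q], [S, R]]`. The equation `JB (x, y) = (p, q)` is equivalent to
`M (q, y) = (x, p)`, so an eigenvector `(x, y)` of `JB` for `μ` gives `M (μ y, y) = (x, μ x)`.
With `w = (μ y, y)`, this yields `w* M w = (μ̄ + μ) y* x`, which vanishes if `μ` is purely
imaginary; positive definiteness then forces `w = 0`, hence `y = 0` and `(x, μ x) = M w = 0`. -/

section Hamiltonian

variable {m α K L : Type*} [Fintype m] [DecidableEq m]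

/-- The Hamiltonian coefficient matrix associated with an arbitrary block matrix
`[[P, Q], [S, R]]`; the Hermitian case is `S = Qᴴ`. Keeping `S` free makes the construction
commute with ring homomorphisms that need not respect a star operation. -/
noncomputable def hamiltonianCoeff [CommRing α] (P Q S R : Matrix m m α) :
    Matrix (m ⊕ m) (m ⊕ m) α :=
  fromBlocks P⁻¹ (-(P⁻¹ * Q)) (-(S * P⁻¹)) (S * P⁻¹ * Q - R)

theorem map_nonsing_inv [Field K] [Field L] (f : K →+* L) (A : Matrix m m K) :
    A⁻¹.map f = (A.map f)⁻¹ := by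
  have hdet : f A.det = (A.map f).det := f.map_det A
  have hadj : A.adjugate.map f = (A.map f).adjugate := f.map_adjugate A
  rw [inv_def, inv_def, Ring.inverse_eq_inv', Ring.inverse_eq_inv', ← hdet, ← hadj, ← map_inv₀]
  exact Matrix.map_smul' f _ _ (map_mul f)

theorem map_J_mul_hamiltonianCoeff [Field K] [Field L] (f : K →+* L) (P Q S R : Matrix m m K) :
    (J m K * hamiltonianCoeff P Q S R).map f =
      J m L * hamiltonianCoeff (P.map f) (Q.map f) (S.map f) (R.map f) := by
  simp only [hamiltonianCoeff, Matrix.map_mul, map_J, fromBlocks_map, Matrix.map_neg f (map_neg f),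
    Matrix.map_sub f (map_sub f), map_nonsing_inv]

theorem J_mul_hamiltonianCoeff_mulVec [CommRing α] (P Q S R : Matrix m m α) (x y : m → α) :
    (J m α * hamiltonianCoeff P Q S R) *ᵥ Sum.elim x y =
      Sum.elim (S *ᵥ (P⁻¹ *ᵥ (x - Q *ᵥ y)) + R *ᵥ y) (P⁻¹ *ᵥ (x - Q *ᵥ y)) := by
  rw [J, hamiltonianCoeff, fromBlocks_multiply, fromBlocks_mulVec]
  simp only [Sum.elim_comp_inl, Sum.elim_comp_inr, zero_mul, one_mul, neg_mul, zero_add, add_zero,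
    neg_neg, neg_mulVec, sub_mulVec, mulVec_sub, mulVec_mulVec, Matrix.mul_assoc]
  congr 1 <;> abel

theorem J_mul_hamiltonianCoeff_mulVec_eq_iff [CommRing α] {P Q S R : Matrix m m α}
    (hP : IsUnit P.det) {x y p q : m → α} :
    (J m α * hamiltonianCoeff P Q S R) *ᵥ Sum.elim x y = Sum.elim p q ↔
      fromBlocks P Q S R *ᵥ Sum.elim q y = Sum.elim x p := by
  have solve_q : P⁻¹ *ᵥ (x - Q *ᵥ y) = q ↔ P *ᵥ q + Q *ᵥ y = x := by
    rw [← eq_sub_iff_add_eq]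
    constructor
    · rintro rfl
      rw [mulVec_mulVec, mul_nonsing_inv P hP, one_mulVec]
    · intro h
      rw [← h, mulVec_mulVec, nonsing_inv_mul P hP, one_mulVec]
  rw [J_mul_hamiltonianCoeff_mulVec, fromBlocks_mulVec, Sum.elim_eq_iff, Sum.elim_eq_iff,
    Sum.elim_comp_inl, Sum.elim_comp_inr, ← solve_q, and_comm]
  exact and_congr_right fun hq => by rw [hq]

end Hamiltonian

theorem star_sumElim_smul_dotProduct_sumElim_smul {m α : Type*} [Fintype m]
    [CommSemiring α] [StarRing α] (μ : α) (x y : m → α) :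
    star (Sum.elim (μ • y) y) ⬝ᵥ Sum.elim x (μ • x) = (star μ + μ) * (star y ⬝ᵥ x) := by
  have hstar : star (Sum.elim (μ • y) y) = Sum.elim (star μ • star y) (star y) := by
    ext (i | i) <;> simp
  rw [hstar, sumElim_dotProduct_sumElim, smul_dotProduct, dotProduct_smul, smul_eq_mul,
    smul_eq_mul, add_mul]

section RCLike

variable {m 𝕜 : Type*} [RCLike 𝕜]

open scoped ComplexOrder MatrixOrder in
theorem posDef_map_ofReal [Finite m] {A : Matrix m m ℝ} (hA : A.PosDef) :
    (A.map (algebraMap ℝ 𝕜)).PosDef := by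
  classical
  have := Fintype.ofFinite m
  obtain ⟨B, hB⟩ := CStarAlgebra.nonneg_iff_eq_star_mul_self.mp hA.posSemidef.nonneg
  have hgram : A.map (algebraMap ℝ 𝕜) =
      (B.map (algebraMap ℝ 𝕜))ᴴ * B.map (algebraMap ℝ 𝕜) := by
    rw [hB, Matrix.map_mul, star_eq_conjTranspose,
      conjTranspose_map (algebraMap ℝ 𝕜) fun r => (RCLike.conj_ofReal r).symm]
  have hdet : (A.map (algebraMap ℝ 𝕜)).det ≠ 0 := by
    rw [← RingHom.mapMatrix_apply, ← RingHom.map_det]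
    exact (map_ne_zero _).mpr hA.det_pos.ne'
  exact (hgram ▸ posSemidef_conjTranspose_mul_self _ : PosSemidef _).posDef_iff_det_ne_zero.mpr hdet

variable [Fintype m] [DecidableEq m]

open scoped ComplexOrder in
theorem isUnit_det_of_posDef_fromBlocks {k : Type*} {P : Matrix m m 𝕜} {Q : Matrix m k 𝕜}
    {S : Matrix k m 𝕜} {R : Matrix k k 𝕜} (hpos : (fromBlocks P Q S R).PosDef) : IsUnit P.det :=
  have hP : P.PosDef := hpos.submatrix (e := Sum.inl) Sum.inl_injective
  hP.det_pos.ne'.isUnit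

open scoped ComplexOrder in
theorem re_ne_zero_of_J_mul_hamiltonianCoeff_mulVec_eq_smul {P Q S R : Matrix m m 𝕜}
    (hpos : (fromBlocks P Q S R).PosDef) {μ : 𝕜} {v : m ⊕ m → 𝕜} (hv : v ≠ 0)
    (h : (J m 𝕜 * hamiltonianCoeff P Q S R) *ᵥ v = μ • v) : RCLike.re μ ≠ 0 := by
  obtain ⟨x, y, rfl⟩ : ∃ x y, v = Sum.elim x y := ⟨_, _, (Sum.elim_comp_inl_inr v).symm⟩
  have hsmul : μ • Sum.elim x y = Sum.elim (μ • x) (μ • y) := by ext (i | i) <;> rfl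
  have hM : fromBlocks P Q S R *ᵥ Sum.elim (μ • y) y = Sum.elim x (μ • x) :=
    (J_mul_hamiltonianCoeff_mulVec_eq_iff (isUnit_det_of_posDef_fromBlocks hpos)).mp (h.trans hsmul)
  have hw : Sum.elim (μ • y) y ≠ 0 := by
    intro hw0
    have hy : y = 0 := congrArg (· ∘ Sum.inr) hw0
    have hx : x = 0 := by
      rw [hw0, mulVec_zero] at hM
      exact congrArg (· ∘ Sum.inl) hM.symm
    exact hv (by rw [hx, hy, Sum.elim_zero_zero])
  intro hμ
  have hform := hpos.dotProduct_mulVec_pos hw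
  have hconj : star μ + μ = 0 := by
    rw [add_comm, RCLike.star_def, RCLike.add_conj, hμ, RCLike.ofReal_zero, mul_zero]
  rw [hM, star_sumElim_smul_dotProduct_sumElim_smul, hconj, zero_mul] at hform
  exact hform.false

open scoped ComplexOrder in
theorem stmt2_general {P Q S R : Matrix m m 𝕜} (hpos : (fromBlocks P Q S R).PosDef) :
    IsUnit P.det ∧
      ∀ μ ∈ spectrum 𝕜 (J m 𝕜 * hamiltonianCoeff P Q S R), RCLike.re μ ≠ 0 := by
  refine ⟨isUnit_det_of_posDef_fromBlocks hpos, fun μ hμ => ?_⟩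
  rw [← spectrum_toLin', ← Module.End.hasEigenvalue_iff_mem_spectrum] at hμ
  obtain ⟨v, hv⟩ := hμ.exists_hasEigenvector
  exact re_ne_zero_of_J_mul_hamiltonianCoeff_mulVec_eq_smul hpos hv.2 hv.apply_eq_smul

end RCLike

theorem stmt2 {n : ℕ} (hn : 1 ≤ n) (P Q R : Matrix (Fin n) (Fin n) ℝ)
    (hPsymm : P.IsSymm) (hRsymm : R.IsSymm)
    (hpos : (Matrix.fromBlocks P Q Qᵀ R).PosDef) :
    IsUnit P.det ∧
      ∀ μ : ℂ, μ ∈ spectrum ℂ ((Jmat n * hamB P Q R).map (Complex.ofReal)) →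
        μ.re ≠ 0 := by
  refine ⟨(stmt2_general hpos).1, fun μ hμ => (stmt2_general ?_).2 μ
    (map_J_mul_hamiltonianCoeff Complex.ofRealHom P Q Qᵀ R ▸ hμ)⟩
  exact fromBlocks_map P Q Qᵀ R Complex.ofReal ▸ posDef_map_ofReal hpos
end
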